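/- arXiv:2503.02273 — 5 statements merged into one kernel-verified Lean document; each statement's English description precedes it below -/
import Mathlib

section
/- Let n, r be positive integers, let D be a symmetric n×n real matrix, let Φ, V₁, V₂ be n×r real matrices with orthonormal columns (ΦᵀΦ = I_r and V₁ᵀV₁ = I_r), and let κ, κ̄ be real numbers with κ ≠ 0. Suppose q̂, p̂, ŵ₁, ŵ₂ : ℝ → ℝʳ are differentiable functions satisfying for all t the quadratic reduced-order model equations q̂′(t) = p̂(t), p̂′(t) = (ΦᵀDΦ) q̂(t) − κ̄ Φᵀ(V₁ŵ₁(t) ⊙ V₂ŵ₂(t)), and ŵ₁′(t) = (κ²κ̄/2) V₁ᵀ(V₂ŵ₂(t) ⊙ Φp̂(t)). Then the lifted energy evaluated along the reconstructed trajectory, t ↦ ½ (Φp̂(t))ᵀ(Φp̂(t)) − ½ (Φq̂(t))ᵀ D (Φq̂(t)) + (1/κ²) (V₁ŵ₁(t))ᵀ(V₁ŵ₁(t)), is constant in t. -/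
/-!
In reduced coordinates, orthonormality of the columns of `Φ` and `V₁` turns the energy into
`½ p̂ᵀp̂ - ½ q̂ᵀA q̂ + κ⁻² ŵ₁ᵀŵ₁` with `A = ΦᵀDΦ` symmetric. Along the flow the linear terms
`p̂ᵀA q̂ - q̂ᵀA p̂` cancel by symmetry, and the quadratic terms are `∓ κ̄` times the same trilinear sum
`∑ i, (Φp̂)ᵢ (V₁ŵ₁)ᵢ (V₂ŵ₂)ᵢ`, because the factor `κ²κ̄/2` in the `ŵ₁` equation matches the weight
`2/κ²` produced by differentiating the last energy term. The derivative is therefore zero.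
-/

open Matrix BigOperators

theorem hasDerivAt_dotProduct {m : ℕ} {u v : ℝ → Fin m → ℝ} {u' v' : Fin m → ℝ} {t : ℝ}
    (hu : HasDerivAt u u' t) (hv : HasDerivAt v v' t) :
    HasDerivAt (fun s => u s ⬝ᵥ v s) (u' ⬝ᵥ v t + u t ⬝ᵥ v') t := by
  simp only [dotProduct, ← Finset.sum_add_distrib]
  exact HasDerivAt.fun_sum fun i _ => (hasDerivAt_pi.1 hu i).mul (hasDerivAt_pi.1 hv i)

theorem hasDerivAt_mulVec {k m : ℕ} (A : Matrix (Fin k) (Fin m) ℝ)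
    {u : ℝ → Fin m → ℝ} {u' : Fin m → ℝ} {t : ℝ} (hu : HasDerivAt u u' t) :
    HasDerivAt (fun s => A *ᵥ u s) (A *ᵥ u') t := by
  refine hasDerivAt_pi.2 fun i => ?_
  simp only [mulVec, dotProduct]
  exact HasDerivAt.fun_sum fun j _ => (hasDerivAt_pi.1 hu j).const_mul (A i j)

theorem mulVec_dotProduct_eq {k m : ℕ} (A : Matrix (Fin k) (Fin m) ℝ)
    (x : Fin m → ℝ) (y : Fin k → ℝ) : A *ᵥ x ⬝ᵥ y = x ⬝ᵥ Aᵀ *ᵥ y := by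
  rw [dotProduct_mulVec, vecMul_transpose]

/-- Theorem 1 of the paper: the energy-quadratization lifting strategy combined with
POD–Galerkin projection yields quadratic ROMs that conserve the lifted FOM energy exactly. -/
theorem rom_energy_quadratization_conserves_lifted_energy
    (n r : ℕ) (hn : 0 < n) (hr : 0 < r)
    (D : Matrix (Fin n) (Fin n) ℝ) (hD : D.IsSymm)
    (Φ V₁ V₂ : Matrix (Fin n) (Fin r) ℝ)
    (hΦ : Φᵀ * Φ = 1) (hV₁ : V₁ᵀ * V₁ = 1)
    (κ κb : ℝ) (hκ : κ ≠ 0)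
    (qh ph w1h w2h : ℝ → Fin r → ℝ)
    (hq : ∀ t, HasDerivAt qh (ph t) t)
    (hp : ∀ t, HasDerivAt ph
      ((Φᵀ * D * Φ).mulVec (qh t)
        - κb • Φᵀ.mulVec (fun i => V₁.mulVec (w1h t) i * V₂.mulVec (w2h t) i)) t)
    (hw1 : ∀ t, HasDerivAt w1h
      ((κ ^ 2 * κb / 2) • V₁ᵀ.mulVec (fun i => V₂.mulVec (w2h t) i * Φ.mulVec (ph t) i)) t) :
    ∀ s t : ℝ,
      (1 / 2) * (Φ.mulVec (ph s) ⬝ᵥ Φ.mulVec (ph s))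
        - (1 / 2) * (Φ.mulVec (qh s) ⬝ᵥ D.mulVec (Φ.mulVec (qh s)))
        + (1 / κ ^ 2) * (V₁.mulVec (w1h s) ⬝ᵥ V₁.mulVec (w1h s))
      = (1 / 2) * (Φ.mulVec (ph t) ⬝ᵥ Φ.mulVec (ph t))
        - (1 / 2) * (Φ.mulVec (qh t) ⬝ᵥ D.mulVec (Φ.mulVec (qh t)))
        + (1 / κ ^ 2) * (V₁.mulVec (w1h t) ⬝ᵥ V₁.mulVec (w1h t)) := by
  have hnorm : ∀ (V : Matrix (Fin n) (Fin r) ℝ), Vᵀ * V = 1 → ∀ x : Fin r → ℝ,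
      V *ᵥ x ⬝ᵥ V *ᵥ x = x ⬝ᵥ x := fun V hV x => by
    rw [mulVec_dotProduct_eq, mulVec_mulVec, hV, one_mulVec]
  have hquad : ∀ x : Fin r → ℝ, Φ *ᵥ x ⬝ᵥ D *ᵥ (Φ *ᵥ x) = x ⬝ᵥ (Φᵀ * D * Φ) *ᵥ x := fun x => by
    rw [mulVec_dotProduct_eq, mulVec_mulVec, mulVec_mulVec, Matrix.mul_assoc]
  have hA : (Φᵀ * D * Φ)ᵀ = Φᵀ * D * Φ := by
    rw [transpose_mul, transpose_mul, transpose_transpose, hD.eq, Matrix.mul_assoc]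
  simp only [hnorm Φ hΦ, hnorm V₁ hV₁, hquad]
  generalize Φᵀ * D * Φ = A at hA hp
  have hderiv : ∀ t, HasDerivAt (fun t => (1 / 2) * (ph t ⬝ᵥ ph t)
      - (1 / 2) * (qh t ⬝ᵥ A *ᵥ qh t) + (1 / κ ^ 2) * (w1h t ⬝ᵥ w1h t)) 0 t := fun t => by
    refine (((hasDerivAt_dotProduct (hp t) (hp t)).const_mul (1 / 2)).sub
      ((hasDerivAt_dotProduct (hq t) (hasDerivAt_mulVec A (hq t))).const_mul (1 / 2)) |>.add
      ((hasDerivAt_dotProduct (hw1 t) (hw1 t)).const_mul (1 / κ ^ 2))).congr_deriv ?_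
    have hsymm : qh t ⬝ᵥ A *ᵥ ph t = ph t ⬝ᵥ A *ᵥ qh t := by
      rw [dotProduct_comm, mulVec_dotProduct_eq, hA]
    -- The two quadratic terms carry the same trilinear sum.
    have htri : w1h t ⬝ᵥ V₁ᵀ *ᵥ (fun i => (V₂ *ᵥ w2h t) i * (Φ *ᵥ ph t) i)
        = ph t ⬝ᵥ Φᵀ *ᵥ (fun i => (V₁ *ᵥ w1h t) i * (V₂ *ᵥ w2h t) i) := by
      rw [← mulVec_dotProduct_eq, ← mulVec_dotProduct_eq]
      exact Finset.sum_congr rfl fun i _ => by ring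
    rw [dotProduct_comm _ (ph t), dotProduct_comm _ (w1h t)]
    simp only [dotProduct_sub, dotProduct_smul, smul_eq_mul, hsymm, htri]
    field_simp
    ring
  exact is_const_of_deriv_eq_zero (fun t => (hderiv t).differentiableAt)
    fun t => (hderiv t).deriv
end

section
/- Let n be a positive integer and D a symmetric n×n real matrix. Suppose q, p, w₁, w₂ : ℝ → ℝⁿ are differentiable and satisfy for all t the standard-lifting quadratic FOM of the one-dimensional sine-Gordon equation: q′ = p, p′ = Dq − w₁, w₁′ = w₂ ⊙ p, w₂′ = −w₁ ⊙ p. Then the lifted energy t ↦ ½ p(t)ᵀp(t) − ½ q(t)ᵀD q(t) + Σᵢ₌₁ⁿ (1 − w₂,ᵢ(t)) is constant in t. -/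
open Matrix BigOperators

/-!
The energy has derivative `p ⬝ᵥ (D q - w₁) - p ⬝ᵥ D q + ∑ i, w₁ᵢ pᵢ = 0`: symmetry of `D` merges
the two halves of the derivative of `q ⬝ᵥ D q`, and the term coming from `w₂` cancels the
nonlinear force `w₁`. A function on `ℝ` with zero derivative is constant.
-/

/-- Product rule for the dot product of two curves in `ℝⁿ`. -/
theorem hasDerivAt_dotProduct_curves {n : ℕ} {u v : ℝ → Fin n → ℝ} {u' v' : Fin n → ℝ} {t : ℝ}
    (hu : HasDerivAt u u' t) (hv : HasDerivAt v v' t) :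
    HasDerivAt (fun s => u s ⬝ᵥ v s) (u' ⬝ᵥ v t + u t ⬝ᵥ v') t := by
  have h := HasDerivAt.fun_sum (u := Finset.univ)
    (fun i _ => (hasDerivAt_pi.1 hu i).mul (hasDerivAt_pi.1 hv i))
  simpa [dotProduct, Finset.sum_add_distrib] using h

theorem hasDerivAt_mulVec_curve {n : ℕ} (D : Matrix (Fin n) (Fin n) ℝ)
    {u : ℝ → Fin n → ℝ} {u' : Fin n → ℝ} {t : ℝ} (hu : HasDerivAt u u' t) :
    HasDerivAt (fun s => D.mulVec (u s)) (D.mulVec u') t := by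
  refine hasDerivAt_pi.2 fun i => ?_
  have h := hasDerivAt_dotProduct_curves (hasDerivAt_const t (D i)) hu
  simpa [mulVec] using h

/-- Full-order energy conservation of the 4n-dimensional standard-lifting quadratic FOM
obtained from the sine-Gordon FOM via w₁ = sin(q), w₂ = cos(q). -/
theorem standard_lifting_sine_gordon_fom_conserves_energy
    (n : ℕ) (hn : 0 < n)
    (D : Matrix (Fin n) (Fin n) ℝ) (hD : D.IsSymm)
    (q p w1 w2 : ℝ → Fin n → ℝ)
    (hq : ∀ t, HasDerivAt q (p t) t)
    (hp : ∀ t, HasDerivAt p (D.mulVec (q t) - w1 t) t)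
    (hw1 : ∀ t, HasDerivAt w1 (fun i => w2 t i * p t i) t)
    (hw2 : ∀ t, HasDerivAt w2 (-fun i => w1 t i * p t i) t) :
    ∀ s t : ℝ,
      (1 / 2) * (p s ⬝ᵥ p s) - (1 / 2) * (q s ⬝ᵥ D.mulVec (q s)) + ∑ i, (1 - w2 s i)
      = (1 / 2) * (p t ⬝ᵥ p t) - (1 / 2) * (q t ⬝ᵥ D.mulVec (q t)) + ∑ i, (1 - w2 t i) := by
  have key : ∀ t, HasDerivAt
      (fun t => (1 / 2) * (p t ⬝ᵥ p t) - (1 / 2) * (q t ⬝ᵥ D.mulVec (q t))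
        + ∑ i, (1 - w2 t i)) 0 t := by
    intro t
    have hpp := hasDerivAt_dotProduct_curves (hp t) (hp t)
    have hqq := hasDerivAt_dotProduct_curves (hq t) (hasDerivAt_mulVec_curve D (hq t))
    have hw := HasDerivAt.fun_sum (u := Finset.univ)
      (fun i _ => (hasDerivAt_pi.1 (hw2 t) i).const_sub 1)
    have hsum : ∑ i, -(-fun i => w1 t i * p t i) i = p t ⬝ᵥ w1 t := by
      simp [dotProduct, mul_comm]
    have hsymm : q t ⬝ᵥ D.mulVec (p t) = p t ⬝ᵥ D.mulVec (q t) := by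
      rw [dotProduct_mulVec, ← mulVec_transpose, hD.eq, dotProduct_comm]
    refine (((hpp.const_mul (1 / 2)).sub (hqq.const_mul (1 / 2))).add hw).congr_deriv ?_
    rw [hsum, hsymm, dotProduct_comm _ (p t), dotProduct_sub]
    ring
  exact is_const_of_deriv_eq_zero (fun t => (key t).differentiableAt) (fun t => (key t).deriv)
end

section
/- Let n, r be positive integers, D a symmetric n×n real matrix, and Φ, V₁, V₂ n×r real matrices with ΦᵀΦ = I_r and V₁ᵀV₁ = I_r. Suppose q̂, p̂, ŵ₁, ŵ₂ : ℝ → ℝʳ are differentiable and satisfy for all t the structure-preserving quadratic ROM of the sine-Gordon equation: q̂′ = p̂, p̂′ = (ΦᵀDΦ) q̂ − 2 Φᵀ(V₁ŵ₁ ⊙ V₂ŵ₂), ŵ₁′ = ½ V₁ᵀ(V₂ŵ₂ ⊙ Φp̂), ŵ₂′ = −½ V₂ᵀ(V₁ŵ₁ ⊙ Φp̂). Then the lifted energy along the reconstructed trajectory, t ↦ ½ (Φp̂(t))ᵀ(Φp̂(t)) − ½ (Φq̂(t))ᵀD(Φq̂(t)) + 2 (V₁ŵ₁(t))ᵀ(V₁ŵ₁(t)),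 is constant in t. -/
open Matrix BigOperators

/-!
Since `Φ` and `V₁` have orthonormal columns, the lifted energy of the reconstructed trajectory is
`½ p̂ᵀp̂ − ½ q̂ᵀ(ΦᵀDΦ)q̂ + 2 ŵ₁ᵀŵ₁`. By symmetry of `D` its time derivative is
`p̂ᵀp̂′ − p̂ᵀ(ΦᵀDΦ)q̂ + 4 ŵ₁ᵀŵ₁′ = −2 (Φp̂)ᵀ(V₁ŵ₁ ⊙ V₂ŵ₂) + 2 (V₁ŵ₁)ᵀ(V₂ŵ₂ ⊙ Φp̂)`.
Both terms are the same trilinear sum `∑ᵢ (Φp̂)ᵢ (V₁ŵ₁)ᵢ (V₂ŵ₂)ᵢ` with opposite coefficients, so the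
derivative vanishes and the energy is constant.
-/

theorem HasDerivAt.dotProduct_real {m : ℕ} {f g : ℝ → Fin m → ℝ} {f' g' : Fin m → ℝ} {t : ℝ}
    (hf : HasDerivAt f f' t) (hg : HasDerivAt g g' t) :
    HasDerivAt (fun s => f s ⬝ᵥ g s) (f' ⬝ᵥ g t + f t ⬝ᵥ g') t := by
  have h := HasDerivAt.fun_sum (u := Finset.univ) (fun i _ =>
    (hasDerivAt_pi.1 hf i).fun_mul (hasDerivAt_pi.1 hg i))
  simp only [dotProduct, ← Finset.sum_add_distrib]
  exact h

theorem HasDerivAt.matrix_mulVec_const {m k : ℕ} (A : Matrix (Fin m) (Fin k) ℝ)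
    {f : ℝ → Fin k → ℝ} {f' : Fin k → ℝ} {t : ℝ} (hf : HasDerivAt f f' t) :
    HasDerivAt (fun s => A *ᵥ f s) (A *ᵥ f') t :=
  (LinearMap.toContinuousLinearMap A.mulVecLin).hasFDerivAt.comp_hasDerivAt t hf

theorem dotProduct_mulVec_transpose {m k : ℕ} (A : Matrix (Fin m) (Fin k) ℝ)
    (x : Fin k → ℝ) (y : Fin m → ℝ) : x ⬝ᵥ (Aᵀ *ᵥ y) = (A *ᵥ x) ⬝ᵥ y := by
  rw [dotProduct_mulVec, vecMul_transpose]

theorem dotProduct_mulVec_of_orthonormal {m k : ℕ} {A : Matrix (Fin m) (Fin k) ℝ}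
    (hA : Aᵀ * A = 1) (x y : Fin k → ℝ) : (A *ᵥ x) ⬝ᵥ (A *ᵥ y) = x ⬝ᵥ y := by
  rw [← dotProduct_mulVec_transpose, mulVec_mulVec, hA, one_mulVec]

/-- The structure-preserving quadratic ROM of the sine-Gordon equation conserves the
lifted FOM energy along the reconstructed trajectory. -/
theorem sp_lifting_sine_gordon_rom_conserves_energy
    (n r : ℕ) (hn : 0 < n) (hr : 0 < r)
    (D : Matrix (Fin n) (Fin n) ℝ) (hD : D.IsSymm)
    (Φ V₁ V₂ : Matrix (Fin n) (Fin r) ℝ)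
    (hΦ : Φᵀ * Φ = 1) (hV₁ : V₁ᵀ * V₁ = 1)
    (qh ph w1h w2h : ℝ → Fin r → ℝ)
    (hq : ∀ t, HasDerivAt qh (ph t) t)
    (hp : ∀ t, HasDerivAt ph
      ((Φᵀ * D * Φ).mulVec (qh t)
        - (2 : ℝ) • Φᵀ.mulVec (fun i => V₁.mulVec (w1h t) i * V₂.mulVec (w2h t) i)) t)
    (hw1 : ∀ t, HasDerivAt w1h
      ((1 / 2 : ℝ) • V₁ᵀ.mulVec (fun i => V₂.mulVec (w2h t) i * Φ.mulVec (ph t) i)) t)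
    (hw2 : ∀ t, HasDerivAt w2h
      (-((1 / 2 : ℝ) • V₂ᵀ.mulVec (fun i => V₁.mulVec (w1h t) i * Φ.mulVec (ph t) i))) t) :
    ∀ s t : ℝ,
      (1 / 2) * (Φ.mulVec (ph s) ⬝ᵥ Φ.mulVec (ph s))
        - (1 / 2) * (Φ.mulVec (qh s) ⬝ᵥ D.mulVec (Φ.mulVec (qh s)))
        + 2 * (V₁.mulVec (w1h s) ⬝ᵥ V₁.mulVec (w1h s))
      = (1 / 2) * (Φ.mulVec (ph t) ⬝ᵥ Φ.mulVec (ph t))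
        - (1 / 2) * (Φ.mulVec (qh t) ⬝ᵥ D.mulVec (Φ.mulVec (qh t)))
        + 2 * (V₁.mulVec (w1h t) ⬝ᵥ V₁.mulVec (w1h t)) := by
  refine is_const_of_deriv_eq_zero (f := fun t =>
    (1 / 2) * (Φ.mulVec (ph t) ⬝ᵥ Φ.mulVec (ph t))
      - (1 / 2) * (Φ.mulVec (qh t) ⬝ᵥ D.mulVec (Φ.mulVec (qh t)))
      + 2 * (V₁.mulVec (w1h t) ⬝ᵥ V₁.mulVec (w1h t))) ?_ ?_ <;>
  intro t <;>
  have hP := (hp t).matrix_mulVec_const Φ <;>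
  have hQ := (hq t).matrix_mulVec_const Φ <;>
  have hW := (hw1 t).matrix_mulVec_const V₁ <;>
  have hE := (((hP.dotProduct_real hP).const_mul (1 / 2)).sub
    ((hQ.dotProduct_real (hQ.matrix_mulVec_const D)).const_mul (1 / 2))).add
    ((hW.dotProduct_real hW).const_mul 2)
  · exact hE.differentiableAt
  · refine hE.deriv.trans ?_
    have hsymm : (Φ *ᵥ qh t) ⬝ᵥ (D *ᵥ (Φ *ᵥ ph t)) = (Φ *ᵥ ph t) ⬝ᵥ (D *ᵥ (Φ *ᵥ qh t)) := by
      conv_lhs => rw [← hD.eq, dotProduct_mulVec_transpose, dotProduct_comm]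
    -- the two nonlinear terms are the same trilinear sum
    have htri : (Φ *ᵥ ph t) ⬝ᵥ (fun i => (V₁ *ᵥ w1h t) i * (V₂ *ᵥ w2h t) i)
        = (V₁ *ᵥ w1h t) ⬝ᵥ (fun i => (V₂ *ᵥ w2h t) i * (Φ *ᵥ ph t) i) :=
      Finset.sum_congr rfl fun i _ => by ring
    rw [hsymm, dotProduct_comm (Φ *ᵥ (_ - _)), dotProduct_comm (V₁ *ᵥ (_ • _)),
      dotProduct_mulVec_of_orthonormal hΦ, dotProduct_mulVec_of_orthonormal hV₁,
      dotProduct_sub, dotProduct_smul, dotProduct_smul, ← mulVec_mulVec, ← mulVec_mulVec,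
      dotProduct_mulVec_transpose, dotProduct_mulVec_transpose, dotProduct_mulVec_transpose, htri]
    simp only [smul_eq_mul]
    ring
end

section
/- Let n be a positive integer and D a symmetric n×n real matrix. Suppose q₁, q₂, p₁, p₂, φ, ϕ : ℝ → ℝⁿ are differentiable and satisfy for all t the space-discretized Klein-Gordon-Zakharov FOM: q₁′ = p₁, q₂′ = p₂, p₁′ = Dq₁ − q₁ − ϕ ⊙ q₁ − (q₁² + q₂²) ⊙ q₁, p₂′ = Dq₂ − q₂ − ϕ ⊙ q₂ − (q₁² + q₂²) ⊙ q₂, φ′ = ϕ + (q₁² + q₂²), ϕ′ = Dφ (squares taken componentwise). Then the energy t ↦ p₁ᵀp₁ + p₂ᵀp₂ + q₁ᵀq₁ + q₂ᵀq₂ − q₁ᵀDq₁ − q₂ᵀDq₂ + ϕᵀ(q₁² + q₂²) − ½ φᵀDφ + ½ ϕᵀϕ + ½ Σᵢ₌₁ⁿ (q₁,ᵢ² + q₂,ᵢ²)² is constant in t. -/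
/-!
The energy has derivative zero along solutions. Since `D` is symmetric, each quadratic form
`x ⬝ᵥ D x` has derivative `2 x' ⬝ᵥ D x` (`hasDerivAt_quadForm`). After inserting the equations
of motion, the derivative of the energy becomes a single sum over the grid index, in which every
summand vanishes identically as a polynomial in the components of the vectors
`q₁, q₂, p₁, p₂, ϕ, D q₁, D q₂, D φ`.
-/

open Matrix BigOperators

theorem hasDerivAt_sq {f : ℝ → ℝ} {f' t : ℝ} (hf : HasDerivAt f f' t) :
    HasDerivAt (fun s => f s ^ 2) (2 * f t * f') t := by
  simpa using hf.fun_pow 2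

theorem hasDerivAt_dotProduct_s16 {n : ℕ} {x y : ℝ → Fin n → ℝ} {x' y' : Fin n → ℝ} {t : ℝ}
    (hx : HasDerivAt x x' t) (hy : HasDerivAt y y' t) :
    HasDerivAt (fun s => x s ⬝ᵥ y s) (x' ⬝ᵥ y t + x t ⬝ᵥ y') t := by
  simp only [dotProduct, ← Finset.sum_add_distrib]
  exact HasDerivAt.fun_sum fun i _ => (hasDerivAt_pi.1 hx i).mul (hasDerivAt_pi.1 hy i)

theorem hasDerivAt_mulVec_s16 {n : ℕ} (D : Matrix (Fin n) (Fin n) ℝ) {x : ℝ → Fin n → ℝ}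
    {x' : Fin n → ℝ} {t : ℝ} (hx : HasDerivAt x x' t) :
    HasDerivAt (fun s => D.mulVec (x s)) (D.mulVec x') t := by
  refine hasDerivAt_pi.2 fun i => ?_
  simp only [mulVec, dotProduct]
  exact HasDerivAt.fun_sum fun j _ => (hasDerivAt_pi.1 hx j).const_mul (D i j)

/-- Symmetry of `D` merges the two product-rule terms into one in which `D` acts on `x t` only. -/
theorem hasDerivAt_quadForm {n : ℕ} {D : Matrix (Fin n) (Fin n) ℝ} (hD : D.IsSymm)
    {x : ℝ → Fin n → ℝ} {x' : Fin n → ℝ} {t : ℝ} (hx : HasDerivAt x x' t) :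
    HasDerivAt (fun s => x s ⬝ᵥ D.mulVec (x s)) (2 * (x' ⬝ᵥ D.mulVec (x t))) t := by
  convert hasDerivAt_dotProduct_s16 hx (hasDerivAt_mulVec_s16 D hx) using 1
  have h : x t ⬝ᵥ D.mulVec x' = x' ⬝ᵥ D.mulVec (x t) := by
    rw [dotProduct_mulVec, ← mulVec_transpose, hD.eq, dotProduct_comm]
  rw [h, two_mul]

/-- The nonlinear conservation law of the space-discretized Klein-Gordon-Zakharov
equations. Here `vphi` plays the role of φ and `phi` the role of ϕ. -/
theorem kgz_fom_conserves_energy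
    (n : ℕ) (hn : 0 < n)
    (D : Matrix (Fin n) (Fin n) ℝ) (hD : D.IsSymm)
    (q1 q2 p1 p2 vphi phi : ℝ → Fin n → ℝ)
    (hq1 : ∀ t, HasDerivAt q1 (p1 t) t)
    (hq2 : ∀ t, HasDerivAt q2 (p2 t) t)
    (hp1 : ∀ t, HasDerivAt p1
      (D.mulVec (q1 t) - q1 t - (fun i => phi t i * q1 t i)
        - fun i => (q1 t i ^ 2 + q2 t i ^ 2) * q1 t i) t)
    (hp2 : ∀ t, HasDerivAt p2
      (D.mulVec (q2 t) - q2 t - (fun i => phi t i * q2 t i)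
        - fun i => (q1 t i ^ 2 + q2 t i ^ 2) * q2 t i) t)
    (hvphi : ∀ t, HasDerivAt vphi (phi t + fun i => q1 t i ^ 2 + q2 t i ^ 2) t)
    (hphi : ∀ t, HasDerivAt phi (D.mulVec (vphi t)) t) :
    ∀ s t : ℝ,
      (p1 s ⬝ᵥ p1 s) + (p2 s ⬝ᵥ p2 s) + (q1 s ⬝ᵥ q1 s) + (q2 s ⬝ᵥ q2 s)
        - (q1 s ⬝ᵥ D.mulVec (q1 s)) - (q2 s ⬝ᵥ D.mulVec (q2 s))
        + (phi s ⬝ᵥ fun i => q1 s i ^ 2 + q2 s i ^ 2)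
        - (1 / 2) * (vphi s ⬝ᵥ D.mulVec (vphi s))
        + (1 / 2) * (phi s ⬝ᵥ phi s)
        + (1 / 2) * ∑ i, (q1 s i ^ 2 + q2 s i ^ 2) ^ 2
      = (p1 t ⬝ᵥ p1 t) + (p2 t ⬝ᵥ p2 t) + (q1 t ⬝ᵥ q1 t) + (q2 t ⬝ᵥ q2 t)
        - (q1 t ⬝ᵥ D.mulVec (q1 t)) - (q2 t ⬝ᵥ D.mulVec (q2 t))
        + (phi t ⬝ᵥ fun i => q1 t i ^ 2 + q2 t i ^ 2)
        - (1 / 2) * (vphi t ⬝ᵥ D.mulVec (vphi t))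
        + (1 / 2) * (phi t ⬝ᵥ phi t)
        + (1 / 2) * ∑ i, (q1 t i ^ 2 + q2 t i ^ 2) ^ 2 := by
  have hr : ∀ t, HasDerivAt (fun s i => q1 s i ^ 2 + q2 s i ^ 2)
      (fun i => 2 * q1 t i * p1 t i + 2 * q2 t i * p2 t i) t := by
    intro t
    refine hasDerivAt_pi.2 fun i => ?_
    exact (hasDerivAt_sq (hasDerivAt_pi.1 (hq1 t) i)).fun_add
      (hasDerivAt_sq (hasDerivAt_pi.1 (hq2 t) i))
  have hquartic : ∀ t, HasDerivAt (fun s => ∑ i, (q1 s i ^ 2 + q2 s i ^ 2) ^ 2)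
      (∑ i, 2 * (q1 t i ^ 2 + q2 t i ^ 2)
        * (2 * q1 t i * p1 t i + 2 * q2 t i * p2 t i)) t := by
    intro t
    exact HasDerivAt.fun_sum fun i _ => hasDerivAt_sq (hasDerivAt_pi.1 (hr t) i)
  have hE := fun t =>
    (((((((((hasDerivAt_dotProduct_s16 (hp1 t) (hp1 t)).fun_add
      (hasDerivAt_dotProduct_s16 (hp2 t) (hp2 t))).fun_add
      (hasDerivAt_dotProduct_s16 (hq1 t) (hq1 t))).fun_add
      (hasDerivAt_dotProduct_s16 (hq2 t) (hq2 t))).fun_sub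
      (hasDerivAt_quadForm hD (hq1 t))).fun_sub
      (hasDerivAt_quadForm hD (hq2 t))).fun_add
      (hasDerivAt_dotProduct_s16 (hphi t) (hr t))).fun_sub
      ((hasDerivAt_quadForm hD (hvphi t)).const_mul (1 / 2))).fun_add
      ((hasDerivAt_dotProduct_s16 (hphi t) (hphi t)).const_mul (1 / 2))).fun_add
      ((hquartic t).const_mul (1 / 2))
  refine is_const_of_deriv_eq_zero (fun t => (hE t).differentiableAt) fun t => ?_
  rw [(hE t).deriv]
  -- The products `D.mulVec _ i` stay atomic, so the cancellation is componentwise.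
  simp only [dotProduct, Finset.mul_sum, ← Finset.sum_add_distrib, ← Finset.sum_sub_distrib,
    Pi.sub_apply, Pi.add_apply]
  refine Finset.sum_eq_zero fun i _ => ?_
  ring
end

section
/- Let n be a positive integer and D a symmetric n×n real matrix. Suppose q₁, q₂, p₁, p₂, φ, ϕ, w : ℝ → ℝⁿ are differentiable and satisfy for all t the lifted Klein-Gordon-Zakharov FOM: q₁′ = p₁, q₂′ = p₂, p₁′ = Dq₁ − q₁ − ϕ ⊙ q₁ − w ⊙ q₁, p₂′ = Dq₂ − q₂ − ϕ ⊙ q₂ − w ⊙ q₂, φ′ = ϕ + w, ϕ′ = Dφ, w′ = 2(q₁ ⊙ p₁) + 2(q₂ ⊙ p₂). Then the lifted energy t ↦ p₁ᵀp₁ + p₂ᵀp₂ + q₁ᵀq₁ + q₂ᵀq₂ − q₁ᵀDq₁ − q₂ᵀDq₂ + ϕᵀw − ½ φᵀDφ + ½ ϕᵀϕ + ½ wᵀw is constant in t. -/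
/-!
The time derivative of the energy vanishes. Symmetry of `D` gives `(uᵀDu)′ = 2 u′ᵀDu`, so along the
flow the terms containing `D` cancel: `2 pᵢᵀDqᵢ` from `(pᵢᵀpᵢ)′` against `(qᵢᵀDqᵢ)′`, and
`(Dφ)ᵀw + ϕᵀDφ` from `(ϕᵀw)′` and `½(ϕᵀϕ)′` against `½(φᵀDφ)′ = (ϕ + w)ᵀDφ`. What is left is
`(ϕ + w)ᵀ(w′ - 2 q₁ ⊙ p₁ - 2 q₂ ⊙ p₂) = 0`.
-/

open Matrix BigOperators

theorem HasDerivAt.kgz_dotProduct {n : ℕ} {u v : ℝ → Fin n → ℝ} {u' v' : Fin n → ℝ} {t : ℝ}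
    (hu : HasDerivAt u u' t) (hv : HasDerivAt v v' t) :
    HasDerivAt (fun x => u x ⬝ᵥ v x) (u' ⬝ᵥ v t + u t ⬝ᵥ v') t := by
  rw [hasDerivAt_pi] at hu hv
  simp only [dotProduct, ← Finset.sum_add_distrib]
  exact HasDerivAt.fun_sum fun i _ => (hu i).mul (hv i)

theorem HasDerivAt.kgz_quadratic {n : ℕ} {D : Matrix (Fin n) (Fin n) ℝ} (hD : D.IsSymm)
    {u : ℝ → Fin n → ℝ} {u' : Fin n → ℝ} {t : ℝ} (hu : HasDerivAt u u' t) :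
    HasDerivAt (fun x => u x ⬝ᵥ D.mulVec (u x)) (2 * (u' ⬝ᵥ D.mulVec (u t))) t := by
  have hDu : HasDerivAt (fun x => D.mulVec (u x)) (D.mulVec u') t := by
    rw [hasDerivAt_pi] at hu ⊢
    intro i
    simp only [mulVec, dotProduct]
    exact HasDerivAt.fun_sum fun j _ => (hu j).const_mul (D i j)
  have hsymm : u t ⬝ᵥ D.mulVec u' = u' ⬝ᵥ D.mulVec (u t) := by
    rw [dotProduct_mulVec, ← mulVec_transpose, hD.eq, dotProduct_comm]
  have h := hu.kgz_dotProduct hDu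
  rwa [hsymm, ← two_mul] at h

/-- Energy conservation of the lifted Klein-Gordon-Zakharov FOM, obtained by introducing
the auxiliary variable w = q₁² + q₂². Here `vphi` plays the role of φ and `phi` of ϕ. -/
theorem kgz_lifted_fom_conserves_energy
    (n : ℕ) (hn : 0 < n)
    (D : Matrix (Fin n) (Fin n) ℝ) (hD : D.IsSymm)
    (q1 q2 p1 p2 vphi phi w : ℝ → Fin n → ℝ)
    (hq1 : ∀ t, HasDerivAt q1 (p1 t) t)
    (hq2 : ∀ t, HasDerivAt q2 (p2 t) t)
    (hp1 : ∀ t, HasDerivAt p1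
      (D.mulVec (q1 t) - q1 t - (fun i => phi t i * q1 t i)
        - fun i => w t i * q1 t i) t)
    (hp2 : ∀ t, HasDerivAt p2
      (D.mulVec (q2 t) - q2 t - (fun i => phi t i * q2 t i)
        - fun i => w t i * q2 t i) t)
    (hvphi : ∀ t, HasDerivAt vphi (phi t + w t) t)
    (hphi : ∀ t, HasDerivAt phi (D.mulVec (vphi t)) t)
    (hw : ∀ t, HasDerivAt w
      (((2 : ℝ) • fun i => q1 t i * p1 t i) + (2 : ℝ) • fun i => q2 t i * p2 t i) t) :
    ∀ s t : ℝ,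
      (p1 s ⬝ᵥ p1 s) + (p2 s ⬝ᵥ p2 s) + (q1 s ⬝ᵥ q1 s) + (q2 s ⬝ᵥ q2 s)
        - (q1 s ⬝ᵥ D.mulVec (q1 s)) - (q2 s ⬝ᵥ D.mulVec (q2 s))
        + (phi s ⬝ᵥ w s)
        - (1 / 2) * (vphi s ⬝ᵥ D.mulVec (vphi s))
        + (1 / 2) * (phi s ⬝ᵥ phi s)
        + (1 / 2) * (w s ⬝ᵥ w s)
      = (p1 t ⬝ᵥ p1 t) + (p2 t ⬝ᵥ p2 t) + (q1 t ⬝ᵥ q1 t) + (q2 t ⬝ᵥ q2 t)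
        - (q1 t ⬝ᵥ D.mulVec (q1 t)) - (q2 t ⬝ᵥ D.mulVec (q2 t))
        + (phi t ⬝ᵥ w t)
        - (1 / 2) * (vphi t ⬝ᵥ D.mulVec (vphi t))
        + (1 / 2) * (phi t ⬝ᵥ phi t)
        + (1 / 2) * (w t ⬝ᵥ w t) := by
  have hE : ∀ t, HasDerivAt (fun s =>
      (p1 s ⬝ᵥ p1 s) + (p2 s ⬝ᵥ p2 s) + (q1 s ⬝ᵥ q1 s) + (q2 s ⬝ᵥ q2 s)
        - (q1 s ⬝ᵥ D.mulVec (q1 s)) - (q2 s ⬝ᵥ D.mulVec (q2 s))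
        + (phi s ⬝ᵥ w s)
        - (1 / 2) * (vphi s ⬝ᵥ D.mulVec (vphi s))
        + (1 / 2) * (phi s ⬝ᵥ phi s)
        + (1 / 2) * (w s ⬝ᵥ w s)) 0 t := by
    intro t
    have h := ((((((((((hp1 t).kgz_dotProduct (hp1 t)).add ((hp2 t).kgz_dotProduct (hp2 t))).add
      ((hq1 t).kgz_dotProduct (hq1 t))).add ((hq2 t).kgz_dotProduct (hq2 t))).sub
      ((hq1 t).kgz_quadratic hD)).sub ((hq2 t).kgz_quadratic hD)).add
      ((hphi t).kgz_dotProduct (hw t))).sub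
      (((hvphi t).kgz_quadratic hD).const_mul (1 / 2 : ℝ))).add
      (((hphi t).kgz_dotProduct (hphi t)).const_mul (1 / 2 : ℝ))).add
      (((hw t).kgz_dotProduct (hw t)).const_mul (1 / 2 : ℝ))
    refine h.congr_deriv ?_
    -- With symmetry of `D` already used, the entries of `D *ᵥ _` can be treated as free
    -- variables: the derivative is a single sum whose summands vanish identically.
    simp only [dotProduct, Finset.mul_sum, ← Finset.sum_add_distrib, ← Finset.sum_sub_distrib]
    refine Finset.sum_eq_zero fun i _ => ?_
    simp only [Pi.add_apply, Pi.sub_apply, Pi.smul_apply, smul_eq_mul]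
    ring
  exact is_const_of_deriv_eq_zero (fun t => (hE t).differentiableAt) (fun t => (hE t).deriv)
end
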